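/- (Theorem 2.1(c)) Let G ⊆ [0,∞) be a Borel set and β ∈ (0, d). Assume the Khoshnevisan–Xiao equivalence holds for X, i.e., C_β(X(G)) = 0 P-almost surely if and only if for every μ ∈ P(G), ∫_{ℝ^d} [∫∫_{G×G} Re χ_ξ(t−s) μ(dt) μ(ds)] ‖ξ‖^{β−d} dξ = +∞ (here X(G) = {X_t(ω) : t ∈ G} is the random image set and C_β is the capacity on Borel subsets of ℝ^d with kernel z ↦ ‖z‖^{−β}). Then C_β(X(G)) = 0 P-almost surely implies C_{g_{d−β,+}}(G) = 0. -/

import Mathlib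

open MeasureTheory Complex
open scoped RealInnerProductSpace ENNReal

noncomputable section

/-- `χ_ξ(x) = exp(−|x| Ψ(sign(x) ξ))`. -/
def chi {d : ℕ} (Ψ : EuclideanSpace ℝ (Fin d) → ℂ) (ξ : EuclideanSpace ℝ (Fin d)) (x : ℝ) : ℂ :=
  Complex.exp (((-|x| : ℝ) : ℂ) * Ψ (Real.sign x • ξ))

/-- `g_{γ,+}(x) = ∫_{ℝ^d} (Re χ_ξ(x))_+ ‖ξ‖^{−γ} dξ`, with values in `[0,∞]`. -/
def gplus {d : ℕ} (Ψ : EuclideanSpace ℝ (Fin d) → ℂ) (γ : ℝ) (x : ℝ) : ℝ≥0∞ :=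
  ∫⁻ ξ : EuclideanSpace ℝ (Fin d),
    ENNReal.ofReal (max ((chi Ψ ξ x).re) 0) * (ENNReal.ofReal ‖ξ‖) ^ (-γ) ∂volume

/-- `g_{γ,−}(x) = ∫_{ℝ^d} (Re χ_ξ(x))_− ‖ξ‖^{−γ} dξ`, with values in `[0,∞]`. -/
def gminus {d : ℕ} (Ψ : EuclideanSpace ℝ (Fin d) → ℂ) (γ : ℝ) (x : ℝ) : ℝ≥0∞ :=
  ∫⁻ ξ : EuclideanSpace ℝ (Fin d),
    ENNReal.ofReal (max (-(chi Ψ ξ x).re) 0) * (ENNReal.ofReal ‖ξ‖) ^ (-γ) ∂volume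

/-- The `f`-energy `E_f(μ) = ∫∫_{G×G} f(t−s) μ(dt)μ(ds)` of a measure on `ℝ`,
for a `[0,∞]`-valued kernel `f`. -/
def energyR (f : ℝ → ℝ≥0∞) (G : Set ℝ) (μ : Measure ℝ) : ℝ≥0∞ :=
  ∫⁻ t in G, ∫⁻ s in G, f (t - s) ∂μ ∂μ

/-- The `f`-capacity `C_f(G) = [inf_{μ ∈ P(G)} E_f(μ)]⁻¹` (with `1/∞ = 0`), the infimum
being over Borel probability measures supported in `G`. -/
def capacityR (f : ℝ → ℝ≥0∞) (G : Set ℝ) : ℝ≥0∞ :=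
  (⨅ (μ : Measure ℝ) (_ : IsProbabilityMeasure μ ∧ μ Gᶜ = 0), energyR f G μ)⁻¹

/-- The Bessel–Riesz capacity `C_β(B) = [inf_ν ∫∫_{B×B} ‖x−y‖^{−β} ν(dx)ν(dy)]⁻¹` on Borel
subsets of `ℝ^d`, the infimum over Borel probability measures supported in `B`. -/
def capacityBeta {d : ℕ} (β : ℝ) (B : Set (EuclideanSpace ℝ (Fin d))) : ℝ≥0∞ :=
  (⨅ (ν : Measure (EuclideanSpace ℝ (Fin d))) (_ : IsProbabilityMeasure ν ∧ ν Bᶜ = 0),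
    ∫⁻ x in B, ∫⁻ y in B, (ENNReal.ofReal ‖x - y‖) ^ (-β) ∂ν ∂ν)⁻¹

theorem ofReal_integral_le_aux {α : Type*} [MeasurableSpace α] (μ : Measure α) (f : α → ℝ) :
    ENNReal.ofReal (∫ x, f x ∂μ) ≤ ∫⁻ x, ENNReal.ofReal (f x) ∂μ := by
  by_cases hf : Integrable f μ
  · rw [integral_eq_lintegral_pos_part_sub_lintegral_neg_part hf]
    refine (ENNReal.ofReal_le_ofReal (sub_le_self _ ENNReal.toReal_nonneg)).trans ?_
    exact ENNReal.ofReal_toReal_le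
  · rw [integral_undef hf]; simp

theorem measurable_sign_aux : Measurable Real.sign := by
  unfold Real.sign
  exact Measurable.ite measurableSet_Iio measurable_const
    (Measurable.ite measurableSet_Ioi measurable_const measurable_const)

theorem measurable_chi_aux {d : ℕ} (Ψ : EuclideanSpace ℝ (Fin d) → ℂ) (hΨ : Measurable Ψ) :
    Measurable fun p : EuclideanSpace ℝ (Fin d) × ℝ => chi Ψ p.1 p.2 := by
  unfold chi
  have h1 : Measurable fun p : EuclideanSpace ℝ (Fin d) × ℝ => Real.sign p.2 • p.1 :=
    (measurable_sign_aux.comp measurable_snd).smul measurable_fst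
  have h2 : Measurable fun p : EuclideanSpace ℝ (Fin d) × ℝ => -|p.2| :=
    (continuous_snd.abs.neg).measurable
  exact Complex.measurable_exp.comp ((Complex.measurable_ofReal.comp h2).mul (hΨ.comp h1))

/-- **Theorem 2.1(c).** Assume the Khoshnevisan–Xiao equivalence for `X`:
`C_β(X(G)) = 0` a.s. iff `∫_{ℝ^d} E_{Re χ_ξ}(μ) ‖ξ‖^{β−d} dξ = ∞` for every
`μ ∈ P(G)`. Then `C_β(X(G)) = 0` a.s. implies `C_{g_{d−β,+}}(G) = 0`. -/
theorem stmt8 {d : ℕ} (hd : 1 ≤ d) (Ψ : EuclideanSpace ℝ (Fin d) → ℂ) (hΨ : Measurable Ψ)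
    {Ω : Type*} [MeasurableSpace Ω] (P : Measure Ω) [IsProbabilityMeasure P]
    (X : ℝ → Ω → EuclideanSpace ℝ (Fin d))
    (hXmeas : Measurable fun p : ℝ × Ω => X p.1 p.2)
    (hX : ∀ s t : ℝ, 0 ≤ s → s ≤ t → ∀ ξ : EuclideanSpace ℝ (Fin d),
      ∫ ω, Complex.exp ((⟪ξ, X t ω - X s ω⟫ : ℂ) * Complex.I) ∂P
        = Complex.exp (((-(t - s) : ℝ) : ℂ) * Ψ ξ))
    (G : Set ℝ) (hG : MeasurableSet G) (hG0 : G ⊆ Set.Ici 0)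
    (β : ℝ) (hβ0 : 0 < β) (hβd : β < d)
    (hKX : (∀ᵐ ω ∂P, capacityBeta β ((fun t => X t ω) '' G) = 0) ↔
      (∀ μ : Measure ℝ, IsProbabilityMeasure μ → μ Gᶜ = 0 →
        ∫⁻ ξ : EuclideanSpace ℝ (Fin d),
          ENNReal.ofReal (∫ t in G, ∫ s in G, (chi Ψ ξ (t - s)).re ∂μ ∂μ)
            * (ENNReal.ofReal ‖ξ‖) ^ (β - d) ∂volume = ⊤))
    (hcap0 : ∀ᵐ ω ∂P, capacityBeta β ((fun t => X t ω) '' G) = 0) :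
    capacityR (gplus Ψ ((d : ℝ) - β)) G = 0 := by
  have hall := hKX.1 hcap0
  have hchi := measurable_chi_aux Ψ hΨ
  unfold capacityR
  rw [ENNReal.inv_eq_zero]
  simp only [iInf_eq_top]
  rintro μ ⟨hμ, hμG⟩
  have htop := hall μ hμ hμG
  rw [← top_le_iff, ← htop]
  set ν := μ.restrict G with hν
  let F : EuclideanSpace ℝ (Fin d) → ℝ → ℝ → ℝ≥0∞ := fun ξ t s =>
    ENNReal.ofReal (max ((chi Ψ ξ (t - s)).re) 0) * (ENNReal.ofReal ‖ξ‖) ^ (-((d : ℝ) - β))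
  have hF : Measurable fun q : (EuclideanSpace ℝ (Fin d) × ℝ) × ℝ => F q.1.1 q.1.2 q.2 := by
    have h1 : Measurable fun q : (EuclideanSpace ℝ (Fin d) × ℝ) × ℝ =>
        chi Ψ q.1.1 (q.1.2 - q.2) :=
      hchi.comp (g := fun p : EuclideanSpace ℝ (Fin d) × ℝ => chi Ψ p.1 p.2)
        (f := fun q : (EuclideanSpace ℝ (Fin d) × ℝ) × ℝ => (q.1.1, q.1.2 - q.2)) (by fun_prop)
    have h2 : Measurable fun q : (EuclideanSpace ℝ (Fin d) × ℝ) × ℝ =>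
        (ENNReal.ofReal ‖q.1.1‖) ^ (-((d : ℝ) - β)) := by fun_prop
    exact ((Complex.measurable_re.comp h1).max measurable_const).ennreal_ofReal.mul h2
  have hE : energyR (gplus Ψ ((d : ℝ) - β)) G μ = ∫⁻ ξ, (∫⁻ t, ∫⁻ s, F ξ t s ∂ν ∂ν) ∂volume := by
    have e1 : ∫⁻ ξ, (∫⁻ t, ∫⁻ s, F ξ t s ∂ν ∂ν) ∂volume = ∫⁻ t, (∫⁻ ξ, (∫⁻ s, F ξ t s ∂ν) ∂volume) ∂ν :=
      lintegral_lintegral_swap (Measurable.lintegral_prod_right'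
        (f := fun q : (EuclideanSpace ℝ (Fin d) × ℝ) × ℝ => F q.1.1 q.1.2 q.2) hF).aemeasurable
    rw [e1]
    unfold energyR gplus
    refine lintegral_congr fun t => ?_
    refine (lintegral_lintegral_swap ?_).symm
    exact (hF.comp (g := fun q : (EuclideanSpace ℝ (Fin d) × ℝ) × ℝ => F q.1.1 q.1.2 q.2)
      (f := fun p : EuclideanSpace ℝ (Fin d) × ℝ => ((p.1, t), p.2)) (by fun_prop)).aemeasurable
  rw [hE]
  refine lintegral_mono fun ξ => ?_
  have hm2 : Measurable fun q : ℝ × ℝ => ENNReal.ofReal (max ((chi Ψ ξ (q.1 - q.2)).re) 0) := by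
    have h1 : Measurable fun q : ℝ × ℝ => chi Ψ ξ (q.1 - q.2) :=
      hchi.comp (g := fun p : EuclideanSpace ℝ (Fin d) × ℝ => chi Ψ p.1 p.2)
        (f := fun q : ℝ × ℝ => (ξ, q.1 - q.2)) (by fun_prop)
    exact ((Complex.measurable_re.comp h1).max measurable_const).ennreal_ofReal
  have e3 : ∫⁻ t, ∫⁻ s, F ξ t s ∂ν ∂ν
      = (∫⁻ t, ∫⁻ s, ENNReal.ofReal (max ((chi Ψ ξ (t - s)).re) 0) ∂ν ∂ν)
        * (ENNReal.ofReal ‖ξ‖) ^ (-((d : ℝ) - β)) := by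
    rw [← lintegral_mul_const _ hm2.lintegral_prod_right]
    refine lintegral_congr fun t => ?_
    have h3 : Measurable fun s : ℝ => ENNReal.ofReal (max ((chi Ψ ξ (t - s)).re) 0) :=
      hm2.comp (g := fun q : ℝ × ℝ => ENNReal.ofReal (max ((chi Ψ ξ (q.1 - q.2)).re) 0))
        (f := fun s : ℝ => (t, s)) (by fun_prop)
    rw [← lintegral_mul_const _ h3]
  dsimp only
  rw [e3, neg_sub]
  gcongr
  refine (ofReal_integral_le_aux _ _).trans (lintegral_mono fun t => ?_)
  refine (ofReal_integral_le_aux _ _).trans (lintegral_mono fun s => ?_)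
  exact ENNReal.ofReal_le_ofReal (le_max_left _ _)
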